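/- Let (A,m) be a free multiarrangement with a locally heavy hyperplane H_0 = ker(α_0) and m_0 = m(H_0). Then there exists a homogeneous basis θ'_1, ..., θ'_ℓ of D(A,m) and an index j such that θ'_j(α_0) = α_0^{m_0}, θ'_i(α_0) = 0 for all i ≠ j, and the restrictions of {θ'_i : i ≠ j} to H_0 form a basis of the free module D(A^{H_0}, m^{H_0}) of the Euler–Ziegler restriction. -/

import Mathlib

open scoped Classical
open MvPolynomial

namespace ArrPaper

variable {K : Type*} [Field K] {ℓ : ℕ}

/-- The coordinate ring `S = K[x₁,…,x_ℓ]`. -/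
noncomputable abbrev S (K : Type*) [Field K] (ℓ : ℕ) := MvPolynomial (Fin ℓ) K

/-- The linear form associated to a covector `c`. -/
noncomputable def linForm (c : Fin ℓ → K) : S K ℓ :=
  ∑ i, MvPolynomial.C (c i) * MvPolynomial.X i

/-- The linear functional associated to a covector. -/
noncomputable def toFunc (c : Fin ℓ → K) : (Fin ℓ → K) →ₗ[K] K :=
  ∑ i, c i • LinearMap.proj i

/-- A (central) hyperplane arrangement, given by a finite set of nonzero,
pairwise non-proportional covectors (defining linear forms). -/
structure Arrangement (K : Type*) [Field K] (ℓ : ℕ) where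
  hyps : Finset (Fin ℓ → K)
  ne_zero : ∀ c ∈ hyps, c ≠ 0
  nonparallel : ∀ c ∈ hyps, ∀ c' ∈ hyps, c ≠ c' → ∀ t : K, c' ≠ t • c

/-- Derivations of the polynomial ring `S`. -/
abbrev Der (K : Type*) [Field K] (ℓ : ℕ) := Derivation K (S K ℓ) (S K ℓ)

/-- `θ` is a logarithmic derivation of the multiarrangement `(A, m)`, i.e.
`θ(α_H) ∈ α_H^{m(H)}·S` for all `H ∈ A`. -/
def IsLogDer (A : Arrangement K ℓ) (m : (Fin ℓ → K) → ℕ) (θ : Der K ℓ) : Prop :=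
  ∀ c ∈ A.hyps, (linForm c) ^ (m c) ∣ θ (linForm c)

/-- `θ` is homogeneous of polynomial degree `d`: `θ(α)` is homogeneous of degree `d`
for every linear form `α`. -/
def IsHomogOfDeg (θ : Der K ℓ) (d : ℕ) : Prop :=
  ∀ c : Fin ℓ → K, (θ (linForm c)).IsHomogeneous d

/-- `θ₁, …, θ_ℓ` form a basis of the `S`-module `D(A,m)`. -/
def IsDerBasis (A : Arrangement K ℓ) (m : (Fin ℓ → K) → ℕ) (θ : Fin ℓ → Der K ℓ) : Prop :=
  (∀ i, IsLogDer A m (θ i)) ∧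
  ∀ η : Der K ℓ, IsLogDer A m η → ∃! f : Fin ℓ → S K ℓ, η = ∑ i, f i • θ i

/-- `(A,m)` is free with a homogeneous basis of degrees (exponents) `d`. -/
def IsFreeWithExp (A : Arrangement K ℓ) (m : (Fin ℓ → K) → ℕ) (d : Fin ℓ → ℕ) : Prop :=
  ∃ θ : Fin ℓ → Der K ℓ, (∀ i, IsHomogOfDeg (θ i) (d i)) ∧ IsDerBasis A m θ

/-- `(A,m)` is a free multiarrangement. -/
def IsFree (A : Arrangement K ℓ) (m : (Fin ℓ → K) → ℕ) : Prop :=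
  ∃ d : Fin ℓ → ℕ, IsFreeWithExp A m d

/-- `|m|`, the total multiplicity. -/
def msum (A : Arrangement K ℓ) (m : (Fin ℓ → K) → ℕ) : ℕ := ∑ c ∈ A.hyps, m c

/-- The rank of an arrangement: the dimension of the span of its covectors. -/
noncomputable def rank (A : Arrangement K ℓ) : ℕ :=
  Module.finrank K (Submodule.span K (A.hyps : Set (Fin ℓ → K)))

/-- `A` is reducible: after a linear change of coordinates it is a product of two
arrangements in complementary (nonzero) subspaces.  In terms of covectors: the
covectors split between two complementary nonzero subspaces of the dual space. -/
def Reducible (A : Arrangement K ℓ) : Prop :=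
  ∃ W₁ W₂ : Submodule K (Fin ℓ → K), W₁ ≠ ⊥ ∧ W₂ ≠ ⊥ ∧ W₁ ⊓ W₂ = ⊥ ∧ W₁ ⊔ W₂ = ⊤ ∧
    ∀ c ∈ A.hyps, c ∈ W₁ ∨ c ∈ W₂

/-- The hyperplanes of the localization at a flat; the flat of codimension `r` is
encoded by the `r`-dimensional subspace `U` of the dual space spanned by the
covectors of the hyperplanes containing it. -/
noncomputable def locHyps (A : Arrangement K ℓ) (U : Submodule K (Fin ℓ → K)) :
    Finset (Fin ℓ → K) :=
  A.hyps.filter (· ∈ U)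

/-- `U` encodes a flat of `A` of codimension `r` (an element of `L_r(A)`). -/
def IsFlatOfRank (A : Arrangement K ℓ) (U : Submodule K (Fin ℓ → K)) (r : ℕ) : Prop :=
  Module.finrank K U = r ∧ Submodule.span K (locHyps A U : Set (Fin ℓ → K)) = U

/-- The localization `A_X` of `A` at the flat encoded by `U`. -/
noncomputable def localize (A : Arrangement K ℓ) (U : Submodule K (Fin ℓ → K)) :
    Arrangement K ℓ where
  hyps := locHyps A U
  ne_zero := fun c hc => A.ne_zero c (Finset.mem_filter.mp hc).1
  nonparallel := fun c hc c' hc' =>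
    A.nonparallel c (Finset.mem_filter.mp hc).1 c' (Finset.mem_filter.mp hc').1

/-- `H₀` (given by covector `c₀`) is a heavy hyperplane of `(A,m)`. -/
def IsHeavy (A : Arrangement K ℓ) (m : (Fin ℓ → K) → ℕ) (c₀ : Fin ℓ → K) : Prop :=
  c₀ ∈ A.hyps ∧ (∑ c ∈ A.hyps.erase c₀, m c) ≤ m c₀

/-- `H₀` (given by covector `c₀`) is a locally heavy hyperplane of `(A,m)`. -/
def IsLocallyHeavy (A : Arrangement K ℓ) (m : (Fin ℓ → K) → ℕ) (c₀ : Fin ℓ → K) : Prop :=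
  c₀ ∈ A.hyps ∧ ∀ U : Submodule K (Fin ℓ → K), IsFlatOfRank A U 2 → c₀ ∈ U →
    3 ≤ (locHyps A U).card → (∑ c ∈ (locHyps A U).erase c₀, m c) ≤ m c₀

/-- `b` is the second Betti number of the rank-2 localization of `(A,m)` at `U`:
the product of the nonzero exponents of this free rank-2 multiarrangement. -/
def IsLocalB2 (A : Arrangement K ℓ) (m : (Fin ℓ → K) → ℕ)
    (U : Submodule K (Fin ℓ → K)) (b : ℕ) : Prop :=
  ∃ d : Fin ℓ → ℕ, IsFreeWithExp (localize A U) m d ∧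
    b = ∏ i ∈ Finset.univ.filter (fun i => d i ≠ 0), d i

/-- `b` is the second Betti number `b₂(A,m)` of the multiarrangement `(A,m)`. -/
def IsB2 (A : Arrangement K ℓ) (m : (Fin ℓ → K) → ℕ) (b : ℕ) : Prop :=
  ∃ bloc : Submodule K (Fin ℓ → K) → ℕ,
    (∀ U, IsFlatOfRank A U 2 → IsLocalB2 A m U (bloc U)) ∧
    b = ∑ᶠ U ∈ {U : Submodule K (Fin ℓ → K) | IsFlatOfRank A U 2}, bloc U

/-- The second Betti number of a simple arrangement:
`b₂(A) = Σ_{X ∈ L₂(A)} (|A_X| - 1)`. -/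
noncomputable def b2Simple (A : Arrangement K ℓ) : ℕ :=
  ∑ᶠ U ∈ {U : Submodule K (Fin ℓ → K) | IsFlatOfRank A U 2}, ((locHyps A U).card - 1)

/-- The Euler–Ziegler multiplicity of the restricted hyperplane `H₀ ∩ ker(c)` of
`A^{H₀}`: `m^{H₀}(X) = |m_X| - m(H₀)`. -/
noncomputable def EZmult (A : Arrangement K ℓ) (m : (Fin ℓ → K) → ℕ)
    (c₀ c : Fin ℓ → K) : ℕ :=
  (∑ c' ∈ A.hyps.filter (· ∈ Submodule.span K ({c₀, c} : Set (Fin ℓ → K))), m c') - m c₀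

/-- Two covectors are parallel (define the same hyperplane). -/
def Parallel {n : ℕ} (b b' : Fin n → K) : Prop := ∃ t : K, t ≠ 0 ∧ b' = t • b

/-- The covector on `K^n` obtained by restricting the covector `c` on `K^{n+1}` to the
hyperplane `ker c₀`, transported by the linear isomorphism `e : ker c₀ ≃ K^n`. -/
noncomputable def resCov {n : ℕ} (c₀ : Fin (n+1) → K)
    (e : ↥(LinearMap.ker (toFunc c₀)) ≃ₗ[K] (Fin n → K)) (c : Fin (n+1) → K) :
    Fin n → K :=
  fun j => toFunc c ((e.symm (Pi.single j 1) : ↥(LinearMap.ker (toFunc c₀))) : Fin (n+1) → K)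

/-- `(B, mB)` is (a model, in coordinates, of) the Euler–Ziegler restriction
`(A^{H₀}, m^{H₀})` of `(A,m)` to the hyperplane `H₀ = ker c₀ ∈ A`. -/
def IsEZRes {n : ℕ} (A : Arrangement K (n+1)) (m : (Fin (n+1) → K) → ℕ)
    (c₀ : Fin (n+1) → K) (B : Arrangement K n) (mB : (Fin n → K) → ℕ) : Prop :=
  c₀ ∈ A.hyps ∧
  ∃ e : ↥(LinearMap.ker (toFunc c₀)) ≃ₗ[K] (Fin n → K),
    (∀ c ∈ A.hyps.erase c₀, ∃ b ∈ B.hyps,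
        Parallel b (resCov c₀ e c) ∧ mB b = EZmult A m c₀ c) ∧
    (∀ b ∈ B.hyps, ∃ c ∈ A.hyps.erase c₀, Parallel b (resCov c₀ e c))

/-- A combinatorial equivalence between two arrangements: a bijection between the
hyperplanes inducing an isomorphism of intersection lattices (it preserves the rank
of every subset of hyperplanes). -/
def CombEquiv (A A' : Arrangement K ℓ) : Prop :=
  ∃ φ : (Fin ℓ → K) → (Fin ℓ → K), Set.BijOn φ ↑A.hyps ↑A'.hyps ∧
    ∀ T : Finset (Fin ℓ → K), T ⊆ A.hyps →
      Module.finrank K (Submodule.span K (T : Set (Fin ℓ → K))) =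
      Module.finrank K (Submodule.span K ((T.image φ) : Set (Fin ℓ → K)))


section Generic

/-- If a power of each prime in a finite family divides `z`, the exponent being the total
multiplicity of the associates of that prime, then the whole product divides `z`. -/
theorem prod_prime_pow_dvd {ι R : Type*} [CommRing R] [IsDomain R] (p : ι → R) (m : ι → ℕ)
    (s : Finset ι) (hp : ∀ i ∈ s, Prime (p i)) (z : R)
    (h : ∀ i ∈ s, p i ^ (∑ j ∈ s with Associated (p i) (p j), m j) ∣ z) :
    ∏ i ∈ s, p i ^ m i ∣ z := by
  induction s using Finset.induction_on generalizing z with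
  | empty => simp
  | insert a s ha ih =>
    have hpa : Prime (p a) := hp a (Finset.mem_insert_self a s)
    obtain ⟨z', rfl⟩ : p a ^ m a ∣ z := by
      refine (pow_dvd_pow _ ?_).trans (h a (Finset.mem_insert_self a s))
      exact Finset.single_le_sum (f := m) (fun _ _ => Nat.zero_le _)
        (by simp)
    rw [Finset.prod_insert ha]
    refine mul_dvd_mul_left _ (ih (fun i hi => hp i (Finset.mem_insert_of_mem hi)) z' ?_)
    intro i hi
    have hpi := hp i (Finset.mem_insert_of_mem hi)
    have hdvd := h i (Finset.mem_insert_of_mem hi)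
    by_cases hia : Associated (p i) (p a)
    · rw [Finset.filter_insert, if_pos hia,
        Finset.sum_insert (fun hmem => ha (Finset.mem_filter.mp hmem).1), pow_add] at hdvd
      have hdvd' := ((hia.symm.pow_pow (n := m a)).mul_right _).dvd.trans hdvd
      exact (mul_dvd_mul_iff_left (pow_ne_zero _ hpa.ne_zero)).mp hdvd'
    · rw [Finset.filter_insert, if_neg hia] at hdvd
      refine hpi.pow_dvd_of_dvd_mul_left _ (fun hd => hia ?_) hdvd
      exact (hpi.dvd_prime_iff_associated hpa).mp (hpi.dvd_of_dvd_pow hd)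

/-- A common divisor of the entries of `M *ᵥ w` divides `det M` if some entry of `w` is a unit. -/
theorem dvd_det_of_dvd_mulVec {n R : Type*} [Fintype n] [DecidableEq n] [CommRing R]
    (M : Matrix n n R) (w : n → R) (k : n) (hk : IsUnit (w k)) (a : R)
    (h : ∀ i, a ∣ (M.mulVec w) i) : a ∣ M.det := by
  have hcr : M.adjugate.mulVec (M.mulVec w) = M.det • w := by
    rw [Matrix.mulVec_mulVec, Matrix.adjugate_mul, Matrix.smul_mulVec, Matrix.one_mulVec]
  have hk' : M.det * w k = ∑ i, M.adjugate k i * (M.mulVec w) i := by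
    simpa [Matrix.mulVec, dotProduct] using (congrFun hcr k).symm
  rw [← hk.dvd_mul_right, hk']
  exact Finset.dvd_sum fun i _ => (h i).mul_left _

/-- Replacing the `k`-th column of `M` by `M *ᵥ w` multiplies the determinant by `w k`. -/
theorem det_updateCol_mulVec {n R : Type*} [Fintype n] [DecidableEq n] [CommRing R]
    (M : Matrix n n R) (w : n → R) (k : n) :
    (M.updateCol k (M.mulVec w)).det = M.det * w k := by
  rw [← Matrix.cramer_apply, Matrix.cramer_eq_adjugate_mulVec, Matrix.mulVec_mulVec,
    Matrix.adjugate_mul, Matrix.smul_mulVec, Matrix.one_mulVec]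
  simp

/-- Hermite interpolation with a degree bound. -/
theorem exists_polynomial_interpolation {K ι : Type*} [Field K] (T : Finset ι) (a : ι → K)
    (ha : Set.InjOn a T) (m : ι → ℕ) (b : ι → K) :
    ∃ p : Polynomial K, p.degree < ((∑ i ∈ T, m i : ℕ) : WithBot ℕ) ∧
      ∀ i ∈ T, (Polynomial.X + Polynomial.C (a i)) ^ m i ∣ p + Polynomial.C (b i) := by
  have hmonic : (∏ i ∈ T, (Polynomial.X + Polynomial.C (a i)) ^ m i).Monic :=
    Polynomial.monic_prod_of_monic _ _ fun i _ => (Polynomial.monic_X_add_C _).pow _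
  have hcop : Pairwise fun i j : T =>
      IsCoprime (Ideal.span {(Polynomial.X + Polynomial.C (a i)) ^ m i})
        (Ideal.span {(Polynomial.X + Polynomial.C (a j)) ^ m j}) := by
    intro i j hij
    rw [Ideal.isCoprime_span_singleton_iff]
    refine IsCoprime.pow ?_
    have hne : -a i ≠ -a j := fun h => hij (Subtype.ext (ha i.2 j.2 (neg_injective h)))
    simpa using Polynomial.isCoprime_X_sub_C_of_isUnit_sub (sub_ne_zero.mpr hne).isUnit
  obtain ⟨q, hq⟩ := Ideal.exists_forall_sub_mem_ideal hcop
    (fun i : T => -Polynomial.C (b i))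
  refine ⟨q %ₘ ∏ i ∈ T, (Polynomial.X + Polynomial.C (a i)) ^ m i, ?_, fun i hi => ?_⟩
  · refine (Polynomial.degree_modByMonic_lt _ hmonic).trans_le (le_of_eq ?_)
    rw [Polynomial.degree_prod]
    simp
  · have h1 := Ideal.mem_span_singleton.mp (hq ⟨i, hi⟩)
    have h2 := Finset.dvd_prod_of_mem
      (fun i => (Polynomial.X + Polynomial.C (a i)) ^ m i) hi
    have h3 := Polynomial.modByMonic_add_div q
      (∏ i ∈ T, (Polynomial.X + Polynomial.C (a i)) ^ m i)
    rw [sub_neg_eq_add] at h1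
    rw [← h3] at h1
    have h4 := dvd_sub h1
      (h2.mul_right (q /ₘ ∏ i ∈ T, (Polynomial.X + Polynomial.C (a i)) ^ m i))
    convert h4 using 1
    ring

/-- Homogenized Hermite interpolation. -/
theorem exists_homogeneous_interpolation {K ι R : Type*} [Field K] [CommRing R] [Algebra K R]
    (T : Finset ι) (a : ι → K) (ha : Set.InjOn a T) (m : ι → ℕ) (n : ℕ)
    (hn : ∑ i ∈ T, m i ≤ n) (x y : R) :
    ∃ P : R, x ∣ P ∧
      ∀ i ∈ T, (y + algebraMap K R (a i) * x) ^ m i ∣ P + algebraMap K R (a i) * x ^ n := by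
  obtain ⟨p, hdeg, hp⟩ := exists_polynomial_interpolation T a ha m a
  let φ : MvPolynomial (Fin 2) K →ₐ[K] R := MvPolynomial.aeval ![y, x]
  refine ⟨φ (p.homogenize n), ?_, fun i hi => ?_⟩
  · simp only [Polynomial.homogenize, map_sum]
    refine Finset.dvd_sum fun kl hkl => ?_
    rw [Finset.HasAntidiagonal.mem_antidiagonal] at hkl
    by_cases h0 : kl.2 = 0
    · rw [Polynomial.coeff_eq_zero_of_degree_lt]
      · simp
      · refine hdeg.trans_le ?_
        exact_mod_cast (by omega : ∑ i ∈ T, m i ≤ kl.1)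
    · have hlast : Finsupp.update (Finsupp.single (0 : Fin 2) kl.1) 1 kl.2 1 = kl.2 := by simp
      rw [MvPolynomial.aeval_monomial, Finsupp.prod_fintype _ _ (by simp), Fin.prod_univ_two]
      simp only [hlast]
      exact Dvd.dvd.mul_left (Dvd.dvd.mul_left (dvd_pow (by simp) h0) _) _
  · obtain ⟨q, hq⟩ := hp i hi
    have hmi : m i ≤ n := (Finset.single_le_sum (fun _ _ => Nat.zero_le _) hi).trans hn
    have hqdeg : q.natDegree ≤ n - m i := by
      rcases eq_or_ne q 0 with rfl | hq0
      · simp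
      have hd : (p + Polynomial.C (a i)).natDegree ≤ n := by
        refine Polynomial.natDegree_add_le_of_degree_le
          (Polynomial.natDegree_le_of_degree_le (hdeg.le.trans (by exact_mod_cast hn))) (by simp)
      rw [hq, ((Polynomial.monic_X_add_C _).pow _).natDegree_mul' hq0] at hd
      simp only [Polynomial.natDegree_pow, Polynomial.natDegree_X_add_C, mul_one] at hd
      omega
    have hpow (k : ℕ) : ((Polynomial.X + Polynomial.C (a i)) ^ k).homogenize k
        = (MvPolynomial.X 0 + MvPolynomial.C (a i) * MvPolynomial.X 1) ^ k := by
      induction k with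
      | zero => simp
      | succ k ih =>
        rw [pow_succ, Polynomial.homogenize_mul _ _ (by simp) (by simp), ih, pow_succ]
        simp
    have hh := congrArg (fun r => φ (Polynomial.homogenize r n)) hq
    simp only [Polynomial.homogenize_add, Polynomial.homogenize_C, map_add] at hh
    rw [← Nat.add_sub_cancel' hmi, Polynomial.homogenize_mul _ _ (by simp) hqdeg, hpow,
      Nat.add_sub_cancel' hmi] at hh
    refine ⟨φ (q.homogenize (n - m i)), ?_⟩
    simpa [φ] using hh

end Generic

section LinearForms

theorem linForm_add (c c' : Fin ℓ → K) : linForm (c + c') = linForm c + linForm c' := by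
  simp [linForm, add_mul, Finset.sum_add_distrib]

theorem linForm_smul (t : K) (c : Fin ℓ → K) : linForm (t • c) = C t * linForm c := by
  simp [linForm, Finset.mul_sum, mul_assoc]

/-- `linForm` as a linear map. -/
noncomputable def linFormHom : (Fin ℓ → K) →ₗ[K] S K ℓ where
  toFun := linForm
  map_add' := linForm_add
  map_smul' t c := by rw [linForm_smul, C_mul', RingHom.id_apply]

theorem linForm_sub (c c' : Fin ℓ → K) : linForm (c - c') = linForm c - linForm c' := by
  simp [linForm, sub_mul, Finset.sum_sub_distrib]

theorem linForm_single (i : Fin ℓ) : linForm (Pi.single i (1 : K)) = X i := by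
  rw [linForm, Finset.sum_eq_single i] <;> simp +contextual

theorem eval_linForm (φ : (Fin ℓ → K) →ₗ[K] K) (c : Fin ℓ → K) :
    eval (fun i => φ (Pi.single i 1)) (linForm c) = φ c := by
  conv_rhs => rw [← Finset.univ_sum_single c, map_sum]
  simp only [linForm, map_sum, map_mul, eval_C, eval_X]
  refine Finset.sum_congr rfl fun i _ => ?_
  rw [← smul_eq_mul, ← map_smul, ← Pi.single_smul, smul_eq_mul, mul_one]

theorem constantCoeff_linForm (c : Fin ℓ → K) : constantCoeff (linForm c) = 0 := by
  simp [linForm]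

theorem linForm_isHomogeneous (c : Fin ℓ → K) : (linForm c).IsHomogeneous 1 :=
  IsHomogeneous.sum _ _ _ fun i _ => by
    simpa using (isHomogeneous_C (Fin ℓ) (c i)).mul (isHomogeneous_X K i)

theorem derivation_linForm {R : Type*} [CommRing R] [Algebra K R] [Algebra (S K ℓ) R]
    [IsScalarTower K (S K ℓ) R] (δ : Derivation K R R) (c : Fin ℓ → K) :
    δ (algebraMap (S K ℓ) R (linForm c))
      = ∑ k, δ (algebraMap (S K ℓ) R (X k)) * algebraMap K R (c k) := by
  have h : algebraMap (S K ℓ) R (linForm c)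
      = ∑ k, c k • algebraMap (S K ℓ) R (X k) := by
    simp only [linForm, map_sum, map_mul, Algebra.smul_def]
    refine Finset.sum_congr rfl fun k _ => ?_
    rw [IsScalarTower.algebraMap_apply K (S K ℓ) R, MvPolynomial.algebraMap_eq]
  rw [h, map_sum]
  refine Finset.sum_congr rfl fun k _ => ?_
  rw [δ.map_smul, Algebra.smul_def, mul_comm]

/-- The ideal generated by a linear space of linear forms is prime. -/
theorem isPrime_span_linForm (U : Submodule K (Fin ℓ → K)) :
    (Ideal.span (linForm '' (U : Set (Fin ℓ → K)))).IsPrime := by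
  obtain ⟨W, hW⟩ := Submodule.exists_isCompl U
  let π : (Fin ℓ → K) →ₗ[K] (Fin ℓ → K) := W.projection U hW.symm
  have hker (c : Fin ℓ → K) : π c = 0 ↔ c ∈ U := W.projection_apply_eq_zero_iff hW.symm
  have hsub (c : Fin ℓ → K) : c - π c ∈ U := by
    rw [← hker, map_sub, sub_eq_zero, eq_comm]
    exact W.projection_apply_of_mem_left hW.symm (W.projection_apply_mem hW.symm c)
  let φ : S K ℓ →ₐ[K] S K ℓ := aeval fun i => linForm (π (Pi.single i 1))
  have hφ (c : Fin ℓ → K) : φ (linForm c) = linForm (π c) := by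
    have hcomp : φ.toLinearMap ∘ₗ linFormHom = linFormHom ∘ₗ π :=
      LinearMap.pi_ext' fun i => LinearMap.ext_ring (by simp [linFormHom, linForm_single, φ])
    exact LinearMap.congr_fun hcomp c
  have heq : Ideal.span (linForm '' (U : Set (Fin ℓ → K))) = RingHom.ker φ := by
    refine le_antisymm (Ideal.span_le.mpr ?_) fun f hf => ?_
    · rintro _ ⟨c, hc, rfl⟩
      rw [SetLike.mem_coe, RingHom.mem_ker, hφ, (hker c).mpr hc]
      simp [linForm]
    · have hmod : (Ideal.Quotient.mkₐ K (Ideal.span (linForm '' (U : Set (Fin ℓ → K))))).comp φ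
          = Ideal.Quotient.mkₐ K _ := by
        refine MvPolynomial.algHom_ext fun i => ?_
        rw [AlgHom.comp_apply, ← linForm_single, hφ, eq_comm]
        refine Ideal.Quotient.eq.mpr (Ideal.subset_span ⟨_, hsub (Pi.single i 1), ?_⟩)
        rw [linForm_sub]
      have hf' := congrArg (fun ψ => ψ f) hmod
      simp only [AlgHom.comp_apply, (RingHom.mem_ker.mp hf), map_zero] at hf'
      exact Ideal.Quotient.eq_zero_iff_mem.mp hf'.symm
  rw [heq]
  exact RingHom.ker_isPrime _

theorem span_linForm_image_span (s : Set (Fin ℓ → K)) :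
    Ideal.span (linForm '' (Submodule.span K s : Set (Fin ℓ → K))) = Ideal.span (linForm '' s) := by
  refine le_antisymm (Ideal.span_le.mpr ?_) (Ideal.span_mono (Set.image_mono Submodule.subset_span))
  rintro _ ⟨c, hc, rfl⟩
  induction hc using Submodule.span_induction with
  | mem c hc => exact Ideal.subset_span ⟨c, hc, rfl⟩
  | zero => simp [linForm]
  | add c c' _ _ h h' => rw [linForm_add]; exact add_mem h h'
  | smul t c _ h => rw [linForm_smul]; exact Ideal.mul_mem_left _ _ h

/-- A linear form lies in the ideal generated by a set of linear forms only if its covector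
lies in the span. -/
theorem mem_span_of_linForm_mem {s : Set (Fin ℓ → K)} {c : Fin ℓ → K}
    (h : linForm c ∈ Ideal.span (linForm '' s)) : c ∈ Submodule.span K s := by
  by_contra hc
  obtain ⟨φ, hφc, hφ⟩ := Submodule.exists_le_ker_of_notMem hc
  refine hφc ?_
  rw [← eval_linForm φ]
  have hle : Ideal.span (linForm '' s) ≤ RingHom.ker (eval fun i => φ (Pi.single i 1)) := by
    rw [Ideal.span_le]
    rintro _ ⟨c', hc', rfl⟩
    simpa [RingHom.mem_ker, eval_linForm] using hφ (Submodule.subset_span hc')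
  exact hle h

theorem linForm_ne_zero {c : Fin ℓ → K} (hc : c ≠ 0) : linForm c ≠ 0 := fun h => by
  have hmem : linForm c ∈ Ideal.span (linForm '' (∅ : Set (Fin ℓ → K))) := by simp [h]
  exact hc (by simpa using mem_span_of_linForm_mem hmem)

theorem prime_linForm {c : Fin ℓ → K} (hc : c ≠ 0) : Prime (linForm c) := by
  rw [← Ideal.span_singleton_prime (linForm_ne_zero hc), ← Set.image_singleton,
    ← span_linForm_image_span]
  exact isPrime_span_linForm _

/-- In the coordinate ring of a hyperplane, a covector independent of the defining one restricts
to a prime element. -/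
theorem prime_mk_linForm {c₀ c : Fin ℓ → K} (hc : c ∉ Submodule.span K {c₀}) :
    Prime (Ideal.Quotient.mk (Ideal.span {linForm c₀}) (linForm c)) := by
  have hne : Ideal.Quotient.mk (Ideal.span {linForm c₀}) (linForm c) ≠ 0 := fun h =>
    hc (mem_span_of_linForm_mem (by simpa using Ideal.Quotient.eq_zero_iff_mem.mp h))
  have hprime : (Ideal.span {linForm c₀, linForm c}).IsPrime := by
    rw [← Set.image_pair, ← span_linForm_image_span]
    exact isPrime_span_linForm _
  have hmap := Ideal.map_isPrime_of_surjective
    (Ideal.Quotient.mk_surjective (I := Ideal.span {linForm c₀}))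
    (I := Ideal.span {linForm c₀, linForm c})
    (by rw [Ideal.mk_ker]; exact Ideal.span_mono (by simp))
  rw [← Ideal.span_singleton_prime hne]
  rwa [Ideal.map_span, Set.image_pair, (Ideal.Quotient.eq_zero_iff_mem).mpr
    (Ideal.mem_span_singleton_self _), Ideal.span_insert_zero] at hmap

theorem mem_span_pair_of_mk_linForm_dvd {c₀ c c' : Fin ℓ → K}
    (h : Ideal.Quotient.mk (Ideal.span {linForm c₀}) (linForm c) ∣
      Ideal.Quotient.mk (Ideal.span {linForm c₀}) (linForm c')) :
    c' ∈ Submodule.span K {c₀, c} := by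
  obtain ⟨q, hq⟩ := h
  obtain ⟨q, rfl⟩ := Ideal.Quotient.mk_surjective q
  rw [← map_mul, Ideal.Quotient.eq] at hq
  refine mem_span_of_linForm_mem ?_
  rw [Set.image_pair]
  rw [← sub_add_cancel (linForm c') (linForm c * q)]
  exact add_mem (Ideal.span_mono (by simp) hq)
    (Ideal.mul_mem_right _ _ (Ideal.subset_span (by simp)))

end LinearForms

section Saito

/-- The coefficient matrix of a family of derivations. -/
noncomputable def coeffMatrix (θ : Fin ℓ → Der K ℓ) : Matrix (Fin ℓ) (Fin ℓ) (S K ℓ) :=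
  Matrix.of fun i k => θ i (X k)

theorem sum_smul_derivation_apply {ι R : Type*} [CommRing R] [Algebra K R] (s : Finset ι)
    (f : ι → R) (δ : ι → Derivation K R R) (p : R) :
    (∑ i ∈ s, f i • δ i) p = ∑ i ∈ s, f i * δ i p := by
  rw [← Derivation.coeFnAddMonoidHom_apply, map_sum, Finset.sum_apply]
  simp

theorem Arrangement.not_mem_span_singleton (A : Arrangement K ℓ) {c c' : Fin ℓ → K}
    (hc : c ∈ A.hyps) (hc' : c' ∈ A.hyps) (h : c ≠ c') : c' ∉ Submodule.span K {c} := fun hmem => by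
  obtain ⟨t, ht⟩ := Submodule.mem_span_singleton.mp hmem
  exact A.nonparallel c hc c' hc' h t ht.symm

theorem Arrangement.linForm_not_dvd (A : Arrangement K ℓ) {c c' : Fin ℓ → K}
    (hc : c ∈ A.hyps) (hc' : c' ∈ A.hyps) (h : c ≠ c') : ¬ linForm c ∣ linForm c' := fun hd =>
  A.not_mem_span_singleton hc hc' h
    (mem_span_of_linForm_mem (by simpa [Ideal.mem_span_singleton] using hd))

theorem prod_linForm_pow_dvd (A : Arrangement K ℓ) (m : (Fin ℓ → K) → ℕ) (z : S K ℓ)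
    (s : Finset (Fin ℓ → K)) (hs : s ⊆ A.hyps) (h : ∀ c ∈ s, linForm c ^ m c ∣ z) :
    ∏ c ∈ s, linForm c ^ m c ∣ z := by
  refine prod_prime_pow_dvd _ _ _ (fun c hc => prime_linForm (A.ne_zero c (hs hc))) z fun c hc => ?_
  have hfil : (s.filter fun c' => Associated (linForm c) (linForm c')) = {c} := by
    ext c'
    simp only [Finset.mem_filter, Finset.mem_singleton]
    refine ⟨fun ⟨hc', hass⟩ => ?_, fun h => by rw [h]; exact ⟨hc, Associated.refl _⟩⟩
    by_contra hne
    exact A.linForm_not_dvd (hs hc) (hs hc') (Ne.symm hne) hass.dvd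
  rw [hfil, Finset.sum_singleton]
  exact h c hc

theorem coeffMatrix_mulVec (θ : Fin ℓ → Der K ℓ) (c : Fin ℓ → K) :
    (coeffMatrix θ).mulVec (fun k => C (c k)) = fun i => θ i (linForm c) := by
  ext1 i
  exact (derivation_linForm (R := S K ℓ) (θ i) c).symm

theorem isUnit_C_of_ne_zero {t : K} (ht : t ≠ 0) : IsUnit (C t : S K ℓ) := ht.isUnit.map C

/-- The easy half of Saito's criterion. -/
theorem prod_linForm_pow_dvd_det (A : Arrangement K ℓ) (m : (Fin ℓ → K) → ℕ)
    (θ : Fin ℓ → Der K ℓ) (h : ∀ i, IsLogDer A m (θ i)) :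
    ∏ c ∈ A.hyps, linForm c ^ m c ∣ (coeffMatrix θ).det := by
  refine prod_linForm_pow_dvd A m _ _ subset_rfl fun c hc => ?_
  obtain ⟨k, hk⟩ := Function.ne_iff.mp (A.ne_zero c hc)
  refine dvd_det_of_dvd_mulVec _ (fun k => C (c k)) k (isUnit_C_of_ne_zero hk) _ fun i => ?_
  rw [coeffMatrix_mulVec]
  exact h i c hc

/-- The determinant of a basis of `D(A,m)` divides, up to a unit, the determinant of the
derivations `(Q / α_c ^ m c) ∂_v` with `v ∈ ker c`, completed by `Q ∂_{k₀}`. -/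
theorem det_dvd_of_isDerBasis (A : Arrangement K ℓ) (m : (Fin ℓ → K) → ℕ)
    (θ : Fin ℓ → Der K ℓ) (h : IsDerBasis A m θ) (c : Fin ℓ → K) (hc : c ∈ A.hyps)
    (k₀ : Fin ℓ) (hk₀ : c k₀ ≠ 0) :
    (coeffMatrix θ).det ∣ (∏ c' ∈ A.hyps, linForm c' ^ m c') * C (c k₀) *
      ∏ _k ∈ Finset.univ.erase k₀, ((∏ c' ∈ A.hyps.erase c, linForm c' ^ m c') * C (c k₀)) := by
  set Q := ∏ c' ∈ A.hyps, linForm c' ^ m c' with hQ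
  set Qc := ∏ c' ∈ A.hyps.erase c, linForm c' ^ m c' with hQc
  have hQQc : linForm c ^ m c * Qc = Q := Finset.mul_prod_erase _ _ hc
  let D : Matrix (Fin ℓ) (Fin ℓ) (S K ℓ) := Matrix.of fun k i =>
    if k = k₀ then (if i = k₀ then Q else 0)
    else Qc * ((if i = k then C (c k₀) else 0) - (if i = k₀ then C (c k) else 0))
  let δ : Fin ℓ → Der K ℓ := fun k => mkDerivation K (D k)
  have hδ : coeffMatrix δ = D := by
    ext1 k i
    simp [coeffMatrix, δ, mkDerivation_X]
  have hmul : D.mulVec (fun k => C (c k)) = fun k => if k = k₀ then Q * C (c k₀) else 0 := by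
    ext1 k
    by_cases hk : k = k₀
    · simp [D, hk, Matrix.mulVec, dotProduct]
    · simp [D, hk, Matrix.mulVec, dotProduct, mul_sub, sub_mul, Finset.sum_sub_distrib]
      ring
  have hlog (k : Fin ℓ) : IsLogDer A m (δ k) := by
    intro c' hc'
    by_cases hcc : c' = c
    · subst hcc
      have := congrFun (coeffMatrix_mulVec δ c') k
      rw [hδ, hmul] at this
      rw [← this]
      dsimp only
      split_ifs
      · exact ((Dvd.intro _ hQQc)).mul_right _
      · exact dvd_zero _
    · have hdvd : linForm c' ^ m c' ∣ Qc :=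
        Finset.dvd_prod_of_mem (fun c' => linForm c' ^ m c') (Finset.mem_erase.mpr ⟨hcc, hc'⟩)
      refine hdvd.trans ?_
      have := congrFun (coeffMatrix_mulVec δ c') k
      rw [hδ] at this
      rw [← this, Matrix.mulVec, dotProduct]
      refine Finset.dvd_sum fun i _ => dvd_mul_of_dvd_left ?_ (C (c' i))
      simp only [D, Matrix.of_apply]
      split_ifs
      any_goals exact dvd_mul_right Qc _
      · exact Dvd.intro_left _ hQQc
      · exact dvd_zero _
  choose F hF _ using fun k => h.2 (δ k) (hlog k)
  have hFD : D = Matrix.of F * coeffMatrix θ := by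
    rw [← hδ]
    ext1 k i
    rw [Matrix.mul_apply]
    simp only [coeffMatrix, Matrix.of_apply]
    rw [hF k, sum_smul_derivation_apply]
  have hdiag : D.updateCol k₀ (D.mulVec fun k => C (c k))
      = Matrix.diagonal fun k => if k = k₀ then Q * C (c k₀) else Qc * C (c k₀) := by
    rw [hmul]
    ext1 k i
    rw [Matrix.updateCol_apply, Matrix.diagonal_apply]
    by_cases hi : i = k₀
    · rw [if_pos hi, hi]
      by_cases hk : k = k₀
      · rw [if_pos hk, if_pos hk, if_pos hk]
      · rw [if_neg hk, if_neg hk]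
    · rw [if_neg hi]
      by_cases hk : k = k₀
      · rw [if_neg (by rw [hk]; exact Ne.symm hi)]
        simp [D, hk, hi]
      · by_cases hik : k = i
        · simp [D, hik, hi]
        · simp [D, hik, hi, hk, Ne.symm hik]
  have hdet := det_updateCol_mulVec D (fun k => C (c k)) k₀
  rw [hdiag, Matrix.det_diagonal, ← Finset.mul_prod_erase _ _ (Finset.mem_univ k₀), if_pos rfl,
    Finset.prod_congr rfl (fun k hk => if_neg (Finset.ne_of_mem_erase hk))] at hdet
  rw [hdet, hFD, Matrix.det_mul]
  exact (dvd_mul_left _ _).mul_right _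

/-- The hard half of Saito's criterion: the determinant of a basis is the defining polynomial. -/
theorem exists_det_eq_of_isDerBasis (A : Arrangement K ℓ) (m : (Fin ℓ → K) → ℕ)
    (hA : A.hyps.Nonempty) (θ : Fin ℓ → Der K ℓ) (h : IsDerBasis A m θ) :
    ∃ u : S K ℓ, IsUnit u ∧ (coeffMatrix θ).det = (∏ c ∈ A.hyps, linForm c ^ m c) * u := by
  obtain ⟨u, hu⟩ := prod_linForm_pow_dvd_det A m θ h.1
  refine ⟨u, ?_, hu⟩
  have hQ0 (s : Finset (Fin ℓ → K)) (hs : s ⊆ A.hyps) : ∏ c ∈ s, linForm c ^ m c ≠ 0 :=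
    Finset.prod_ne_zero_iff.mpr fun c hc => pow_ne_zero _ (linForm_ne_zero (A.ne_zero c (hs hc)))
  have hdvd (c : Fin ℓ → K) (hc : c ∈ A.hyps) : ∃ t : S K ℓ, IsUnit t ∧
      u ∣ t * ∏ _k ∈ (Finset.univ : Finset (Fin ℓ)),
        ((∏ c' ∈ A.hyps.erase c, linForm c' ^ m c') * t) := by
    obtain ⟨k₀, hk₀⟩ := Function.ne_iff.mp (A.ne_zero c hc)
    have hd := det_dvd_of_isDerBasis A m θ h c hc k₀ hk₀
    rw [hu, mul_assoc] at hd
    refine ⟨C (c k₀), isUnit_C_of_ne_zero hk₀, ?_⟩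
    refine ((mul_dvd_mul_iff_left (hQ0 _ subset_rfl)).mp hd).trans (mul_dvd_mul_left _ ?_)
    exact Finset.prod_dvd_prod_of_subset _ _ _ (Finset.erase_subset _ _)
  have hprime (p : S K ℓ) (hp : Prime p) (hpu : p ∣ u) (c : Fin ℓ → K) (hc : c ∈ A.hyps) :
      ∃ c' ∈ A.hyps, c' ≠ c ∧ Associated p (linForm c') := by
    obtain ⟨t, ht, hut⟩ := hdvd c hc
    have hpt : ¬ p ∣ t := fun hd => hp.not_isUnit (isUnit_of_dvd_unit hd ht)
    obtain ⟨_, _, hd⟩ := hp.exists_mem_finset_dvd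
      ((hp.dvd_or_dvd (hpu.trans hut)).resolve_left hpt)
    obtain ⟨c', hc', hd⟩ := hp.exists_mem_finset_dvd ((hp.dvd_or_dvd hd).resolve_right hpt)
    rw [Finset.mem_erase] at hc'
    exact ⟨c', hc'.2, hc'.1, (hp.dvd_prime_iff_associated (prime_linForm (A.ne_zero c' hc'.2))).mp
      (hp.dvd_of_dvd_pow hd)⟩
  by_contra hunit
  obtain ⟨c, hc⟩ := hA
  have hu0 : u ≠ 0 := by
    rintro rfl
    obtain ⟨t, ht, hut⟩ := hdvd c hc
    refine mul_ne_zero ht.ne_zero (Finset.prod_ne_zero_iff.mpr fun _ _ => ?_) (zero_dvd_iff.mp hut)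
    exact mul_ne_zero (hQ0 _ (Finset.erase_subset _ _)) ht.ne_zero
  obtain ⟨p, hp, hpu⟩ := WfDvdMonoid.exists_irreducible_factor hunit hu0
  obtain ⟨c₁, hc₁, -, h₁⟩ := hprime p hp.prime hpu c hc
  obtain ⟨c₂, hc₂, hne, h₂⟩ := hprime p hp.prime hpu c₁ hc₁
  exact A.linForm_not_dvd hc₁ hc₂ hne.symm (h₁.symm.trans h₂).dvd

end Saito

section Restriction

/-- The coordinate ring of the hyperplane `ker c₀`. -/
abbrev HypRing (c₀ : Fin ℓ → K) := S K ℓ ⧸ Ideal.span {linForm c₀}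

/-- The restriction of polynomials to the hyperplane `ker c₀`. -/
noncomputable abbrev res (c₀ : Fin ℓ → K) : S K ℓ →+* HypRing c₀ :=
  Ideal.Quotient.mk (Ideal.span {linForm c₀})

theorem res_linForm_self (c₀ : Fin ℓ → K) : res c₀ (linForm c₀) = 0 :=
  Ideal.Quotient.eq_zero_iff_mem.mpr (Ideal.mem_span_singleton_self _)

theorem EZmult_eq (A : Arrangement K ℓ) (m : (Fin ℓ → K) → ℕ) {c₀ : Fin ℓ → K} (h₀ : c₀ ∈ A.hyps)
    (c : Fin ℓ → K) : EZmult A m c₀ c =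
      ∑ c' ∈ A.hyps.erase c₀ with c' ∈ Submodule.span K {c₀, c}, m c' := by
  have hmem : c₀ ∈ A.hyps.filter (· ∈ Submodule.span K {c₀, c}) :=
    Finset.mem_filter.mpr ⟨h₀, Submodule.subset_span (by simp)⟩
  rw [EZmult, ← Finset.add_sum_erase _ _ hmem, Nat.add_sub_cancel_left, Finset.filter_erase]

/-- A hyperplane through `ker c₀ ∩ ker c` other than `ker c₀` has an equation
`α_c + a α_{c₀}`. -/
theorem Arrangement.exists_eq_smul_add (A : Arrangement K ℓ) {c₀ c c' : Fin ℓ → K}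
    (h₀ : c₀ ∈ A.hyps) (hc' : c' ∈ A.hyps.erase c₀) (h : c' ∈ Submodule.span K {c₀, c}) :
    ∃ t a : K, t ≠ 0 ∧ c' = t • (c + a • c₀) := by
  obtain ⟨a, b, rfl⟩ := Submodule.mem_span_pair.mp h
  have hb : b ≠ 0 := by
    rintro rfl
    rw [Finset.mem_erase] at hc'
    exact A.nonparallel c₀ h₀ _ hc'.2 (Ne.symm hc'.1) a (by simp)
  refine ⟨b, a / b, hb, ?_⟩
  rw [smul_add, smul_smul, mul_div_cancel₀ _ hb, add_comm]

theorem res_linForm_smul_add (c₀ c : Fin ℓ → K) (t a : K) :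
    res c₀ (linForm (t • (c + a • c₀))) = res c₀ (C t) * res c₀ (linForm c) := by
  rw [linForm_smul, linForm_add, linForm_smul, map_mul, map_add, map_mul, res_linForm_self]
  ring

theorem isFlatOfRank_two_span_pair (A : Arrangement K ℓ) {c₀ c : Fin ℓ → K}
    (h₀ : c₀ ∈ A.hyps) (hc : c ∈ A.hyps.erase c₀) :
    IsFlatOfRank A (Submodule.span K {c₀, c}) 2 := by
  rw [Finset.mem_erase] at hc
  refine ⟨?_, le_antisymm (Submodule.span_le.mpr fun c' hc' => ?_) (Submodule.span_mono ?_)⟩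
  · have hli : LinearIndependent K ![c₀, c] :=
      (LinearIndependent.pair_iff' (A.ne_zero c₀ h₀)).mpr fun t ht =>
        A.nonparallel c₀ h₀ c hc.2 (Ne.symm hc.1) t ht.symm
    have hrank := finrank_span_eq_card hli
    rwa [Matrix.range_cons_cons_empty, Fintype.card_fin] at hrank
  · exact (Finset.mem_filter.mp hc').2
  · rintro c' (rfl | rfl)
    · exact Finset.mem_filter.mpr ⟨h₀, Submodule.subset_span (by simp)⟩
    · exact Finset.mem_filter.mpr ⟨hc.2, Submodule.subset_span (by simp)⟩

/-- If `H₀` is locally heavy, every logarithmic derivation of `(A,m)` restricts to a logarithmic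
derivation of the Euler–Ziegler restriction. -/
theorem res_linForm_pow_EZmult_dvd (A : Arrangement K ℓ) (m : (Fin ℓ → K) → ℕ)
    {c₀ : Fin ℓ → K} (hlh : IsLocallyHeavy A m c₀) {θ : Der K ℓ} (hθ : IsLogDer A m θ)
    {c : Fin ℓ → K} (hc : c ∈ A.hyps.erase c₀) :
    res c₀ (linForm c) ^ EZmult A m c₀ c ∣ res c₀ (θ (linForm c)) := by
  have h₀ := hlh.1
  rw [EZmult_eq A m h₀]
  set T := (A.hyps.erase c₀).filter (· ∈ Submodule.span K {c₀, c}) with hT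
  have hTA : T ⊆ A.hyps := (Finset.filter_subset _ _).trans (Finset.erase_subset _ _)
  have hcT : c ∈ T := Finset.mem_filter.mpr ⟨hc, Submodule.subset_span (by simp)⟩
  by_cases hcard : T.card ≤ 1
  · have hTc : T = {c} :=
      (Finset.eq_singleton_iff_unique_mem).mpr ⟨hcT, fun c' hc' =>
        Finset.card_le_one.mp hcard c' hc' c hcT⟩
    rw [hTc, Finset.sum_singleton, ← map_pow]
    exact map_dvd _ (hθ c (hTA hcT))
  have hTloc : (locHyps A (Submodule.span K {c₀, c})).erase c₀ = T := by
    rw [hT, locHyps, Finset.filter_erase]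
  have hheavy : ∑ c' ∈ T, m c' ≤ m c₀ := by
    rw [← hTloc]
    refine hlh.2 _ (isFlatOfRank_two_span_pair A h₀ hc) (Submodule.subset_span (by simp)) ?_
    have hmem : c₀ ∈ locHyps A (Submodule.span K {c₀, c}) :=
      Finset.mem_filter.mpr ⟨h₀, Submodule.subset_span (by simp)⟩
    rw [← Finset.card_erase_add_one hmem, hTloc]
    omega
  have hex (c' : Fin ℓ → K) : ∃ t a : K, c' ∈ T → t ≠ 0 ∧ c' = t • (c + a • c₀) := by
    by_cases hc' : c' ∈ T
    · obtain ⟨t, a, h⟩ := A.exists_eq_smul_add h₀ (Finset.mem_filter.mp hc').1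
        (Finset.mem_filter.mp hc').2
      exact ⟨t, a, fun _ => h⟩
    · exact ⟨0, 0, fun h => absurd h hc'⟩
  choose t a hta using hex
  have hinj : Set.InjOn a T := by
    intro c₁ hc₁ c₂ hc₂ h12
    by_contra hne
    obtain ⟨ht₁, he₁⟩ := hta c₁ hc₁
    obtain ⟨-, he₂⟩ := hta c₂ hc₂
    refine A.nonparallel c₁ (hTA hc₁) c₂ (hTA hc₂) hne (t c₂ / t c₁) ?_
    calc c₂ = t c₂ • (c + a c₂ • c₀) := he₂
      _ = (t c₂ / t c₁) • (t c₁ • (c + a c₁ • c₀)) := by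
        rw [smul_smul, div_mul_cancel₀ _ ht₁, h12]
      _ = (t c₂ / t c₁) • c₁ := by rw [← he₁]
  obtain ⟨g, hg⟩ := hθ c₀ h₀
  obtain ⟨P, ⟨P', rfl⟩, hP⟩ := exists_homogeneous_interpolation T a hinj m (m c₀) hheavy
    (linForm c₀) (linForm c)
  have hdvd : ∏ c' ∈ T, linForm c' ^ m c' ∣ θ (linForm c) - linForm c₀ * P' * g := by
    refine prod_linForm_pow_dvd A m _ T hTA fun c' hc' => ?_
    obtain ⟨ht, he⟩ := hta c' hc'
    have hlin : linForm c' = C (t c') * (linForm c + C (a c') * linForm c₀) := by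
      conv_lhs => rw [he, linForm_smul, linForm_add, linForm_smul]
    have hθc' : θ (linForm c') = C (t c') * (θ (linForm c) + C (a c') * θ (linForm c₀)) := by
      rw [hlin]
      simp only [Derivation.leibniz, map_add, derivation_C, smul_eq_mul, mul_zero, add_zero]
    have h1 := hθ c' (hTA hc')
    have hunit := isUnit_C_of_ne_zero (ℓ := ℓ) ht
    rw [hθc', hunit.dvd_mul_left, hlin, mul_pow, (hunit.pow _).mul_left_dvd, hg] at h1
    rw [hlin, mul_pow, (hunit.pow _).mul_left_dvd]
    have h2 := dvd_sub h1 ((hP c' hc').mul_right g)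
    rw [MvPolynomial.algebraMap_eq] at h2
    convert h2 using 1
    ring
  have hres := map_dvd (res c₀) hdvd
  rw [map_sub, map_mul, map_mul, res_linForm_self, zero_mul, zero_mul, sub_zero, map_prod] at hres
  refine dvd_trans ?_ hres
  rw [← Finset.prod_pow_eq_pow_sum]
  refine Finset.prod_dvd_prod_of_dvd _ _ fun c' hc' => ?_
  rw [map_pow]
  refine pow_dvd_pow_of_dvd ?_ _
  rw [(hta c' hc').2, res_linForm_smul_add]
  exact dvd_mul_left _ _

/-- The covector congruent to `c` modulo `c₀` with vanishing `j₀`-th coordinate. -/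
noncomputable def elimCoord (c₀ : Fin ℓ → K) (j₀ : Fin ℓ) (c : Fin ℓ → K) : Fin ℓ → K :=
  c - (c j₀ / c₀ j₀) • c₀

theorem elimCoord_self {c₀ : Fin ℓ → K} {j₀ : Fin ℓ} (h : c₀ j₀ ≠ 0) (c : Fin ℓ → K) :
    elimCoord c₀ j₀ c j₀ = 0 := by
  simp [elimCoord, h]

theorem linForm_elimCoord (c₀ : Fin ℓ → K) (j₀ : Fin ℓ) (c : Fin ℓ → K) :
    linForm (elimCoord c₀ j₀ c) = linForm c - C (c j₀ / c₀ j₀) * linForm c₀ := by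
  rw [elimCoord, linForm_sub, linForm_smul]

theorem res_linForm_elimCoord (c₀ : Fin ℓ → K) (j₀ : Fin ℓ) (c : Fin ℓ → K) :
    res c₀ (linForm (elimCoord c₀ j₀ c)) = res c₀ (linForm c) := by
  rw [linForm_elimCoord, map_sub, map_mul, res_linForm_self, mul_zero, sub_zero]

theorem isDomain_hypRing {c₀ : Fin ℓ → K} (h : c₀ ≠ 0) : IsDomain (HypRing c₀) := by
  have : (Ideal.span {linForm c₀}).IsPrime :=
    (Ideal.span_singleton_prime (linForm_ne_zero h)).mpr (prime_linForm h)
  exact Ideal.Quotient.isDomain _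

theorem Arrangement.associated_res_linForm_iff (A : Arrangement K ℓ) {c₀ c c' : Fin ℓ → K}
    (h₀ : c₀ ∈ A.hyps) (hc' : c' ∈ A.hyps.erase c₀) :
    Associated (res c₀ (linForm c)) (res c₀ (linForm c')) ↔ c' ∈ Submodule.span K {c₀, c} := by
  refine ⟨fun h => mem_span_pair_of_mk_linForm_dvd h.dvd, fun h => ?_⟩
  obtain ⟨t, a, ht, rfl⟩ := A.exists_eq_smul_add h₀ hc' h
  rw [res_linForm_smul_add]
  exact (associated_unit_mul_left _ _ ((isUnit_C_of_ne_zero ht).map _)).symm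

/-- The easy half of Saito's criterion for the Euler–Ziegler restriction. The rows of `N` hold the
coefficients of derivations of the coordinate ring of `ker c₀`; the `j₀`-th column plays no role. -/
theorem res_prod_dvd_det (A : Arrangement K ℓ) (m : (Fin ℓ → K) → ℕ) {c₀ : Fin ℓ → K}
    (h₀ : c₀ ∈ A.hyps) {j₀ : Fin ℓ} (N : Matrix (Fin ℓ) (Fin ℓ) (HypRing c₀))
    (h : ∀ i, ∀ c ∈ A.hyps.erase c₀, res c₀ (linForm c) ^ EZmult A m c₀ c ∣
      ∑ k, N i k * res c₀ (C (elimCoord c₀ j₀ c k))) :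
    res c₀ (∏ c ∈ A.hyps.erase c₀, linForm c ^ m c) ∣ N.det := by
  have := isDomain_hypRing (A.ne_zero c₀ h₀)
  simp only [map_prod, map_pow]
  have hnot (c : Fin ℓ → K) (hc : c ∈ A.hyps.erase c₀) : c ∉ Submodule.span K {c₀} :=
    A.not_mem_span_singleton h₀ (Finset.mem_of_mem_erase hc) (Finset.ne_of_mem_erase hc).symm
  refine prod_prime_pow_dvd (fun c => res c₀ (linForm c)) m _
    (fun c hc => prime_mk_linForm (hnot c hc)) _ fun c hc => ?_
  rw [Finset.filter_congr fun c' hc' => A.associated_res_linForm_iff h₀ hc', ← EZmult_eq A m h₀]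
  obtain ⟨k, hk⟩ : ∃ k, elimCoord c₀ j₀ c k ≠ 0 := by
    by_contra! hzero
    refine hnot c hc (Submodule.mem_span_singleton.mpr ⟨c j₀ / c₀ j₀, ?_⟩)
    exact (sub_eq_zero.mp (funext hzero)).symm
  exact dvd_det_of_dvd_mulVec N (fun k => res c₀ (C (elimCoord c₀ j₀ c k))) k
    ((isUnit_C_of_ne_zero hk).map _) _ fun i => h i c hc

end Restriction

section Homogeneous

/-- A cofactor of a nonzero homogeneous polynomial in a homogeneous polynomial is homogeneous. -/
theorem isHomogeneous_of_mul {σ : Type*} {p q : MvPolynomial σ K} {k n : ℕ} (hp : p.IsHomogeneous k)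
    (hp0 : p ≠ 0) (hpq : (p * q).IsHomogeneous n) :
    q = 0 ∨ ∃ e, k + e = n ∧ q.IsHomogeneous e := by
  have hcomp (e : ℕ) : homogeneousComponent (k + e) (p * q) = p * homogeneousComponent e q := by
    let := gradedAlgebra (σ := σ) (R := K)
    have h := DirectSum.coe_decompose_mul_add_of_left_mem (homogeneousSubmodule σ K) (i := k)
      (j := e) (b := q) ((mem_homogeneousSubmodule k p).mpr hp)
    rwa [← decomposition.decompose'_apply, ← decomposition.decompose'_apply]
  have hzero (e : ℕ) (he : k + e ≠ n) : homogeneousComponent e q = 0 := by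
    have h := hcomp e
    rw [homogeneousComponent_of_mem hpq, if_neg he] at h
    exact (mul_eq_zero.mp h.symm).resolve_left hp0
  by_cases hq : q = 0
  · exact Or.inl hq
  obtain ⟨e, he⟩ : ∃ e, homogeneousComponent e q ≠ 0 := by
    by_contra! hall
    exact hq (by rw [← sum_homogeneousComponent q]; exact Finset.sum_eq_zero fun e _ => hall e)
  have hke : k + e = n := by_contra fun h => he (hzero e h)
  refine Or.inr ⟨e, hke, ?_⟩
  rw [← sum_homogeneousComponent q]
  refine IsHomogeneous.sum _ _ _ fun e' _ => ?_
  by_cases hee : e' = e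
  · rw [hee]
    exact homogeneousComponent_isHomogeneous e q
  · rw [hzero e' (by omega)]
    exact isHomogeneous_zero _ _ _

/-- A homogeneous polynomial with nonzero constant coefficient is constant. -/
theorem eq_C_of_constantCoeff_ne_zero {σ : Type*} {p : MvPolynomial σ K} {n : ℕ}
    (hp : p.IsHomogeneous n) (h : constantCoeff p ≠ 0) : p = C (constantCoeff p) := by
  have hn : n = 0 := by
    by_contra hn
    exact h (hp.coeff_eq_zero (by simpa using Ne.symm hn))
  subst hn
  rw [← homogeneousComponent_eq_self hp, homogeneousComponent_zero]
  simp

end Homogeneous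

section Adapted

/-- The restriction to `ker c₀` of the coefficient matrix, with the `j₀`-th column replaced
by `g`. -/
noncomputable def resMatrix (c₀ : Fin ℓ → K) (j₀ : Fin ℓ) (θ : Fin ℓ → Der K ℓ)
    (g : Fin ℓ → S K ℓ) : Matrix (Fin ℓ) (Fin ℓ) (HypRing c₀) :=
  (res c₀).mapMatrix ((coeffMatrix θ).updateCol j₀ g)

theorem resMatrix_apply_self (c₀ : Fin ℓ → K) (j₀ : Fin ℓ) (θ : Fin ℓ → Der K ℓ)
    (g : Fin ℓ → S K ℓ) (i : Fin ℓ) : resMatrix c₀ j₀ θ g i j₀ = res c₀ (g i) := by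
  simp [resMatrix]

theorem resMatrix_apply_ne (c₀ : Fin ℓ → K) {j₀ : Fin ℓ} (θ : Fin ℓ → Der K ℓ)
    (g : Fin ℓ → S K ℓ) (i : Fin ℓ) {k : Fin ℓ} (hk : k ≠ j₀) :
    resMatrix c₀ j₀ θ g i k = res c₀ (θ i (X k)) := by
  simp [resMatrix, hk, coeffMatrix]

theorem res_prod_ne_zero (A : Arrangement K ℓ) (m : (Fin ℓ → K) → ℕ) {c₀ : Fin ℓ → K}
    (h₀ : c₀ ∈ A.hyps) : res c₀ (∏ c ∈ A.hyps.erase c₀, linForm c ^ m c) ≠ 0 := by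
  have := isDomain_hypRing (A.ne_zero c₀ h₀)
  rw [map_prod]
  refine Finset.prod_ne_zero_iff.mpr fun c hc => ?_
  rw [map_pow]
  exact pow_ne_zero _ (prime_mk_linForm (A.not_mem_span_singleton h₀ (Finset.mem_of_mem_erase hc)
    (Finset.ne_of_mem_erase hc).symm)).ne_zero

theorem exists_det_resMatrix_eq (A : Arrangement K ℓ) (m : (Fin ℓ → K) → ℕ) {c₀ : Fin ℓ → K}
    (h₀ : c₀ ∈ A.hyps) {j₀ : Fin ℓ} (hj₀ : c₀ j₀ ≠ 0) {θ : Fin ℓ → Der K ℓ}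
    (hθ : IsDerBasis A m θ) {g : Fin ℓ → S K ℓ}
    (hg : ∀ i, θ i (linForm c₀) = linForm c₀ ^ m c₀ * g i) :
    ∃ u, IsUnit u ∧ (resMatrix c₀ j₀ θ g).det =
      res c₀ (∏ c ∈ A.hyps.erase c₀, linForm c ^ m c) * u := by
  obtain ⟨u, hu, hdet⟩ := exists_det_eq_of_isDerBasis A m ⟨c₀, h₀⟩ θ hθ
  refine ⟨res c₀ (u * C (c₀ j₀)), (hu.mul (isUnit_C_of_ne_zero hj₀)).map _, ?_⟩
  have hcol := det_updateCol_mulVec (coeffMatrix θ) (fun k => C (c₀ k)) j₀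
  rw [coeffMatrix_mulVec] at hcol
  have hsmul : (fun i => θ i (linForm c₀)) = linForm c₀ ^ m c₀ • g := by
    ext1 i
    simp [hg i]
  rw [hsmul, Matrix.det_updateCol_smul, hdet, ← Finset.mul_prod_erase _ _ h₀, mul_assoc,
    mul_assoc] at hcol
  have hcancel := mul_left_cancel₀
    (pow_ne_zero _ (linForm_ne_zero (A.ne_zero c₀ h₀))) hcol
  rw [resMatrix, ← RingHom.map_det, hcancel, map_mul]

/-- A row agreeing off the `j₀`-th column with the restriction of a logarithmic derivation
satisfies the divisibility conditions of the Euler–Ziegler restriction. -/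
theorem dvd_sum_of_isLogDer (A : Arrangement K ℓ) (m : (Fin ℓ → K) → ℕ)
    (hm : ∀ c ∈ A.hyps, 0 < m c) {c₀ : Fin ℓ → K} (hlh : IsLocallyHeavy A m c₀) {j₀ : Fin ℓ}
    (hj₀ : c₀ j₀ ≠ 0) {θ : Der K ℓ} (hθ : IsLogDer A m θ) (r : Fin ℓ → HypRing c₀)
    (hr : ∀ k, k ≠ j₀ → r k = res c₀ (θ (X k))) {c : Fin ℓ → K} (hc : c ∈ A.hyps.erase c₀) :
    res c₀ (linForm c) ^ EZmult A m c₀ c ∣ ∑ k, r k * res c₀ (C (elimCoord c₀ j₀ c k)) := by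
  have hsum : ∑ k, r k * res c₀ (C (elimCoord c₀ j₀ c k))
      = res c₀ (θ (linForm (elimCoord c₀ j₀ c))) := by
    have hlin : θ (linForm (elimCoord c₀ j₀ c)) = ∑ k, θ (X k) * C (elimCoord c₀ j₀ c k) :=
      derivation_linForm (K := K) (ℓ := ℓ) (R := S K ℓ) θ (elimCoord c₀ j₀ c)
    rw [hlin, map_sum]
    refine Finset.sum_congr rfl fun k _ => ?_
    by_cases hk : k = j₀
    · simp [hk, elimCoord_self hj₀]
    · rw [hr k hk, map_mul]
  have hzero : res c₀ (θ (linForm c₀)) = 0 := by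
    obtain ⟨q, hq⟩ := hθ c₀ hlh.1
    rw [hq, map_mul, map_pow, res_linForm_self, zero_pow (hm c₀ hlh.1).ne', zero_mul]
  rw [hsum, linForm_elimCoord, map_sub, Derivation.leibniz, derivation_C, smul_zero, add_zero,
    smul_eq_mul, map_sub, map_mul, hzero, mul_zero, sub_zero]
  exact res_linForm_pow_EZmult_dvd A m hlh hθ hc

/-- If the restrictions of the `g i` generate the unit ideal, they do not all vanish at the
origin. -/
theorem exists_constantCoeff_ne_zero_of_isUnit_sum {c₀ : Fin ℓ → K} (g : Fin ℓ → S K ℓ)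
    (h : Fin ℓ → HypRing c₀) (hu : IsUnit (∑ i, res c₀ (g i) * h i)) :
    ∃ j, constantCoeff (g j) ≠ 0 := by
  by_contra! hall
  let ε : HypRing c₀ →+* K := Ideal.Quotient.lift _ (constantCoeff (R := K) (σ := Fin ℓ)) (by
    intro p hp
    obtain ⟨q, rfl⟩ := Ideal.mem_span_singleton.mp hp
    rw [map_mul, constantCoeff_linForm, zero_mul])
  refine (hu.map ε).ne_zero ?_
  rw [map_sum]
  refine Finset.sum_eq_zero fun i _ => ?_
  rw [map_mul, Ideal.Quotient.lift_mk, hall i, zero_mul]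

theorem exists_constantCoeff_ne_zero (A : Arrangement K ℓ) (m : (Fin ℓ → K) → ℕ)
    (hm : ∀ c ∈ A.hyps, 0 < m c) {c₀ : Fin ℓ → K} (hlh : IsLocallyHeavy A m c₀)
    {θ : Fin ℓ → Der K ℓ} (hθ : IsDerBasis A m θ) {g : Fin ℓ → S K ℓ}
    (hg : ∀ i, θ i (linForm c₀) = linForm c₀ ^ m c₀ * g i) :
    ∃ j, constantCoeff (g j) ≠ 0 := by
  have h₀ := hlh.1
  have := isDomain_hypRing (A.ne_zero c₀ h₀)
  obtain ⟨j₀, hj₀⟩ := Function.ne_iff.mp (A.ne_zero c₀ h₀)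
  obtain ⟨u, hu, hdet⟩ := exists_det_resMatrix_eq A m h₀ hj₀ hθ hg
  set N := resMatrix c₀ j₀ θ g with hN
  have hminor (i : Fin ℓ) : res c₀ (∏ c ∈ A.hyps.erase c₀, linForm c ^ m c) ∣
      N.cramer (Pi.single i 1) j₀ := by
    rw [Matrix.cramer_apply]
    refine res_prod_dvd_det A m h₀ (j₀ := j₀) _ fun i' c hc => ?_
    refine dvd_sum_of_isLogDer A m hm hlh hj₀ (hθ.1 i') _ (fun k hk => ?_) hc
    rw [Matrix.updateCol_ne hk, hN, resMatrix_apply_ne c₀ θ g i' hk]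
  choose h hh using hminor
  have hexp : N.det = ∑ i, res c₀ (g i) * N.cramer (Pi.single i 1) j₀ := by
    have hcol : N.updateCol j₀ (fun i => res c₀ (g i)) = N := by
      ext i k
      by_cases hk : k = j₀
      · rw [hk, Matrix.updateCol_self, hN, resMatrix_apply_self]
      · rw [Matrix.updateCol_ne hk]
    conv_lhs => rw [← hcol, ← Matrix.cramer_apply, pi_eq_sum_univ' (fun i => res c₀ (g i))]
    rw [map_sum, Finset.sum_apply]
    refine Finset.sum_congr rfl fun i _ => ?_
    rw [map_smul, Pi.smul_apply, smul_eq_mul]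
  refine exists_constantCoeff_ne_zero_of_isUnit_sum g h ?_
  have hcancel : res c₀ (∏ c ∈ A.hyps.erase c₀, linForm c ^ m c) * ∑ i, res c₀ (g i) * h i
      = res c₀ (∏ c ∈ A.hyps.erase c₀, linForm c ^ m c) * u := by
    rw [← hdet, hexp, Finset.mul_sum]
    refine Finset.sum_congr rfl fun i _ => ?_
    rw [hh i]
    ring
  rw [mul_left_cancel₀ (res_prod_ne_zero A m h₀) hcancel]
  exact hu

end Adapted

section AdaptedBasis

theorem IsLogDer.add {A : Arrangement K ℓ} {m : (Fin ℓ → K) → ℕ} {θ η : Der K ℓ}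
    (hθ : IsLogDer A m θ) (hη : IsLogDer A m η) : IsLogDer A m (θ + η) := fun c hc => by
  rw [Derivation.add_apply]
  exact dvd_add (hθ c hc) (hη c hc)

theorem IsLogDer.sub {A : Arrangement K ℓ} {m : (Fin ℓ → K) → ℕ} {θ η : Der K ℓ}
    (hθ : IsLogDer A m θ) (hη : IsLogDer A m η) : IsLogDer A m (θ - η) := fun c hc => by
  rw [Derivation.sub_apply]
  exact dvd_sub (hθ c hc) (hη c hc)

theorem IsLogDer.smul {A : Arrangement K ℓ} {m : (Fin ℓ → K) → ℕ} {θ : Der K ℓ}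
    (hθ : IsLogDer A m θ) (f : S K ℓ) : IsLogDer A m (f • θ) := fun c hc => by
  rw [Derivation.smul_apply, smul_eq_mul]
  exact (hθ c hc).mul_left f

/-- Eliminating along `φ`: if `φ = t⁻¹ θ_j` and `g_j = t`, then `θ_j` may be replaced by `φ` and
the other `θ_i` by `θ_i - g_i φ`. -/
theorem IsDerBasis.eliminate {A : Arrangement K ℓ} {m : (Fin ℓ → K) → ℕ} {θ : Fin ℓ → Der K ℓ}
    (hθ : IsDerBasis A m θ) {g : Fin ℓ → S K ℓ} {j : Fin ℓ} {t : K} (ht : t ≠ 0)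
    (hgj : g j = C t) :
    IsDerBasis A m fun i =>
      (θ i - g i • (C t⁻¹ : S K ℓ) • θ j) + if i = j then (C t⁻¹ : S K ℓ) • θ j else 0 := by
  set φ : Der K ℓ := (C t⁻¹ : S K ℓ) • θ j with hφ
  have hφlog : IsLogDer A m φ := (hθ.1 j).smul _
  have htt : (C t⁻¹ : S K ℓ) * C t = 1 := by rw [← C_mul, inv_mul_cancel₀ ht, C_1]
  have hψj : θ j - g j • φ = 0 := by
    rw [hφ, smul_smul, hgj, mul_comm, htt, one_smul, sub_self]
  have hold (f : Fin ℓ → S K ℓ) : ∑ i, f i • θ i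
      = ∑ i, f i • (θ i - g i • φ) + (∑ i, f i * g i) • φ := by
    rw [Finset.sum_smul, ← Finset.sum_add_distrib]
    refine Finset.sum_congr rfl fun i _ => ?_
    rw [smul_sub, smul_smul, sub_add_cancel]
  have hnew (F : Fin ℓ → S K ℓ) : ∑ i, F i • ((θ i - g i • φ) + if i = j then φ else 0)
      = ∑ i, F i • (θ i - g i • φ) + F j • φ := by
    simp only [smul_add, Finset.sum_add_distrib, smul_ite, smul_zero, Finset.sum_ite_eq',
      Finset.mem_univ, if_true]
  have hsingle (f : Fin ℓ → S K ℓ) (s : S K ℓ) :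
      ∑ i, (f + Pi.single j s : Fin ℓ → S K ℓ) i • (θ i - g i • φ) = ∑ i, f i • (θ i - g i • φ) := by
    refine Finset.sum_congr rfl fun i _ => ?_
    by_cases hi : i = j
    · rw [hi, hψj, smul_zero, smul_zero]
    · simp [hi]
  refine ⟨fun i => ?_, fun η hη => ?_⟩
  · refine IsLogDer.add ?_ ?_
    · exact (hθ.1 i).sub (hφlog.smul _)
    · split_ifs
      · exact hφlog
      · exact fun c _ => by simp
  obtain ⟨f, hf, hfu⟩ := hθ.2 η hη
  have hcoeff (F : Fin ℓ → S K ℓ)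
      (hF : η = ∑ i, F i • ((θ i - g i • φ) + if i = j then φ else 0)) :
      F + Pi.single j ((F j - ∑ i, F i * g i) * C t⁻¹) = f ∧ F j = ∑ i, f i * g i := by
    have hsum : ∑ i, (F + Pi.single j ((F j - ∑ i, F i * g i) * C t⁻¹) : Fin ℓ → S K ℓ) i * g i
        = F j := by
      simp only [Pi.add_apply, add_mul, Finset.sum_add_distrib, Pi.single_apply, ite_mul, zero_mul,
        Finset.sum_ite_eq', Finset.mem_univ, if_true, hgj, mul_assoc, htt, mul_one]
      ring
    have heq := hfu (F + Pi.single j ((F j - ∑ i, F i * g i) * C t⁻¹)) (by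
      beta_reduce
      rw [hold, hsingle, hsum, ← hnew, ← hF])
    exact ⟨heq, by rw [← heq, hsum]⟩
  refine ⟨f + Pi.single j (∑ i, f i * g i - f j), ?_, fun F hF => ?_⟩
  · beta_reduce
    rw [hnew, hsingle, hf, hold]
    simp
  · obtain ⟨h1, h2⟩ := hcoeff F hF
    ext1 i
    by_cases hi : i = j
    · simp [hi, h2]
    · simp [← h1, hi]

/-- A free multiarrangement with a locally heavy hyperplane has a homogeneous basis adapted to
that hyperplane. -/
theorem exists_adapted_basis (A : Arrangement K ℓ) (m : (Fin ℓ → K) → ℕ)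
    (hm : ∀ c ∈ A.hyps, 0 < m c) {c₀ : Fin ℓ → K} (hlh : IsLocallyHeavy A m c₀)
    {θ : Fin ℓ → Der K ℓ} {d : Fin ℓ → ℕ} (hd : ∀ i, IsHomogOfDeg (θ i) (d i))
    (hθ : IsDerBasis A m θ) :
    ∃ θ' : Fin ℓ → Der K ℓ, (∀ i, IsHomogOfDeg (θ' i) (d i)) ∧ IsDerBasis A m θ' ∧
      ∃ j, θ' j (linForm c₀) = linForm c₀ ^ m c₀ ∧ ∀ i, i ≠ j → θ' i (linForm c₀) = 0 := by
  choose g hg using fun i => hθ.1 i c₀ hlh.1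
  obtain ⟨j, hj⟩ := exists_constantCoeff_ne_zero A m hm hlh hθ hg
  have hpow : (linForm c₀ ^ m c₀ : S K ℓ) ≠ 0 :=
    pow_ne_zero _ (linForm_ne_zero (A.ne_zero c₀ hlh.1))
  have hpowhom : (linForm c₀ ^ m c₀ : S K ℓ).IsHomogeneous (m c₀) := by
    simpa using (linForm_isHomogeneous c₀).pow (m c₀)
  have hghom (i : Fin ℓ) : g i = 0 ∨ ∃ e, m c₀ + e = d i ∧ (g i).IsHomogeneous e :=
    isHomogeneous_of_mul hpowhom hpow (hg i ▸ hd i c₀)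
  set t := constantCoeff (g j) with ht
  obtain ⟨hgj, hdj⟩ : g j = C t ∧ d j = m c₀ := by
    rcases hghom j with h0 | ⟨e, he, hge⟩
    · exact absurd (by rw [ht, h0, map_zero]) hj
    · have hC := eq_C_of_constantCoeff_ne_zero hge hj
      have he0 : e = 0 := hge.inj_right (hC ▸ isHomogeneous_C _ _)
        (fun h => hj (by rw [ht, h, map_zero]))
      exact ⟨hC, by omega⟩
  have htt : (C t⁻¹ : S K ℓ) * C t = 1 := by rw [← C_mul, inv_mul_cancel₀ hj, C_1]
  have hφ : ((C t⁻¹ : S K ℓ) • θ j) (linForm c₀) = linForm c₀ ^ m c₀ := by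
    rw [Derivation.smul_apply, smul_eq_mul, hg j, hgj, mul_left_comm, htt, mul_one]
  have hφhom : IsHomogOfDeg ((C t⁻¹ : S K ℓ) • θ j) (m c₀) := fun c => by
    rw [Derivation.smul_apply, smul_eq_mul, ← hdj]
    exact (hd j c).C_mul _
  refine ⟨_, fun i c => ?_, hθ.eliminate hj hgj, j, ?_, fun i hi => ?_⟩
  · rw [Derivation.add_apply, Derivation.sub_apply, Derivation.smul_apply, smul_eq_mul]
    refine ((hd i c).sub ?_).add ?_
    · rcases hghom i with h0 | ⟨e, he, hge⟩
      · rw [h0, zero_mul]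
        exact isHomogeneous_zero _ _ _
      · rw [← he, add_comm]
        exact hge.mul (hφhom c)
    · split_ifs with hi
      · rw [hi, hdj]
        exact hφhom c
      · exact isHomogeneous_zero _ _ _
  · rw [if_pos rfl, Derivation.add_apply, Derivation.sub_apply, Derivation.smul_apply, hφ, hg j,
      smul_eq_mul]
    ring
  · rw [if_neg hi, add_zero, Derivation.sub_apply, Derivation.smul_apply, hφ, hg i, smul_eq_mul]
    ring

end AdaptedBasis

section RestrictedBasis

/-- A derivation killing `α_{c₀}` induces a derivation of the coordinate ring of `ker c₀`. -/
theorem exists_derivation_res {c₀ : Fin ℓ → K} {θ : Der K ℓ} (h : θ (linForm c₀) = 0) :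
    ∃ δ : Derivation K (HypRing c₀) (HypRing c₀), ∀ p, δ (res c₀ p) = res c₀ (θ p) := by
  have hker (p : S K ℓ) (hp : Ideal.Quotient.mkₐ K (Ideal.span {linForm c₀}) p = 0) :
      Ideal.Quotient.mkₐ K (Ideal.span {linForm c₀}) (θ p) = 0 := by
    obtain ⟨q, rfl⟩ := Ideal.mem_span_singleton.mp (Ideal.Quotient.eq_zero_iff_mem.mp hp)
    rw [Derivation.leibniz, h, smul_zero, add_zero, smul_eq_mul]
    exact Ideal.Quotient.eq_zero_iff_mem.mpr (Ideal.mem_span_singleton.mpr ⟨θ q, rfl⟩)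
  exact ⟨Derivation.liftOfSurjective (Ideal.Quotient.mkₐ_surjective K _) hker,
    Derivation.liftOfSurjective_apply _ hker⟩

theorem derivation_res_linForm {c₀ : Fin ℓ → K} (δ : Derivation K (HypRing c₀) (HypRing c₀))
    (c : Fin ℓ → K) : δ (res c₀ (linForm c)) = ∑ k, δ (res c₀ (X k)) * res c₀ (C (c k)) :=
  derivation_linForm (K := K) (ℓ := ℓ) (R := HypRing c₀) δ c

/-- A derivation of the coordinate ring of `ker c₀` is determined by its values on all but one of
the coordinates, provided that `c₀` involves the remaining one. -/
theorem derivation_hypRing_ext {c₀ : Fin ℓ → K} {j₀ : Fin ℓ} (hj₀ : c₀ j₀ ≠ 0)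
    {δ δ' : Derivation K (HypRing c₀) (HypRing c₀)}
    (h : ∀ k, k ≠ j₀ → δ (res c₀ (X k)) = δ' (res c₀ (X k))) : δ = δ' := by
  have hall (k : Fin ℓ) : δ (res c₀ (X k)) = δ' (res c₀ (X k)) := by
    by_cases hk : k = j₀
    · have h1 := derivation_res_linForm δ c₀
      rw [res_linForm_self, map_zero, ← map_zero δ', ← res_linForm_self,
        derivation_res_linForm δ', ← Finset.add_sum_erase _ _ (Finset.mem_univ j₀),
        ← Finset.add_sum_erase _ _ (Finset.mem_univ j₀),
        Finset.sum_congr rfl fun k hk => by rw [← h k (Finset.ne_of_mem_erase hk)]] at h1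
      rw [hk]
      exact (((isUnit_C_of_ne_zero hj₀).map (res c₀)).mul_right_cancel
        (add_right_cancel h1)).symm
    · exact h k hk
  refine Derivation.ext fun x => ?_
  obtain ⟨p, rfl⟩ := Ideal.Quotient.mk_surjective x
  induction p using MvPolynomial.induction_on with
  | C a =>
    have hC : res c₀ (C a) = algebraMap K (HypRing c₀) a := rfl
    rw [hC, Derivation.map_algebraMap, Derivation.map_algebraMap]
  | add p q hp hq => rw [map_add, map_add, map_add, hp, hq]
  | mul_X p k hp => rw [map_mul, Derivation.leibniz, Derivation.leibniz, hp, hall k]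

/-- The restrictions of an adapted basis form a basis of the Euler–Ziegler restriction. -/
theorem existsUnique_eq_sum_smul_res (A : Arrangement K ℓ) (m : (Fin ℓ → K) → ℕ)
    (hm : ∀ c ∈ A.hyps, 0 < m c) {c₀ : Fin ℓ → K} (hlh : IsLocallyHeavy A m c₀)
    {θ : Fin ℓ → Der K ℓ} (hθ : IsDerBasis A m θ) {j : Fin ℓ}
    (hj : θ j (linForm c₀) = linForm c₀ ^ m c₀) (hne : ∀ i, i ≠ j → θ i (linForm c₀) = 0)
    {δ : {i : Fin ℓ // i ≠ j} → Derivation K (HypRing c₀) (HypRing c₀)}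
    (hδ : ∀ i p, δ i (res c₀ p) = res c₀ (θ i.val p))
    {η : Derivation K (HypRing c₀) (HypRing c₀)}
    (hη : ∀ c ∈ A.hyps.erase c₀,
      res c₀ (linForm c) ^ EZmult A m c₀ c ∣ η (res c₀ (linForm c))) :
    ∃! f : {i : Fin ℓ // i ≠ j} → HypRing c₀, η = ∑ i, f i • δ i := by
  have h₀ := hlh.1
  have := isDomain_hypRing (A.ne_zero c₀ h₀)
  obtain ⟨j₀, hj₀⟩ := Function.ne_iff.mp (A.ne_zero c₀ h₀)
  obtain ⟨u, hu, hdet⟩ := exists_det_resMatrix_eq A m h₀ hj₀ hθ (g := Pi.single j 1) (by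
    intro i
    by_cases hi : i = j
    · rw [hi, hj, Pi.single_eq_same, mul_one]
    · rw [hne i hi, Pi.single_eq_of_ne hi, mul_zero])
  set N := resMatrix c₀ j₀ θ (Pi.single j 1) with hN
  have hself (i : Fin ℓ) : N i j₀ = if i = j then 1 else 0 := by
    rw [hN, resMatrix_apply_self]
    split_ifs with hi
    · rw [hi, Pi.single_eq_same, map_one]
    · rw [Pi.single_eq_of_ne hi, map_zero]
  have hrest (i : Fin ℓ) {k : Fin ℓ} (hk : k ≠ j₀) : N i k = res c₀ (θ i (X k)) :=
    resMatrix_apply_ne c₀ θ _ i hk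
  have hdet0 : N.det ≠ 0 := by
    rw [hdet]
    exact mul_ne_zero (res_prod_ne_zero A m h₀) hu.ne_zero
  have hvecMul (F : Fin ℓ → HypRing c₀) (hF : F j = 0) {k : Fin ℓ} (hk : k ≠ j₀) :
      (Matrix.vecMul F N) k = (∑ i : {i // i ≠ j}, F i • δ i) (res c₀ (X k)) := by
    rw [Matrix.vecMul, dotProduct, Fintype.sum_eq_add_sum_subtype_ne _ j, hF, zero_mul, zero_add,
      sum_smul_derivation_apply]
    exact Finset.sum_congr rfl fun i _ => by rw [hδ, hrest _ hk]
  let r : Fin ℓ → HypRing c₀ := fun k => if k = j₀ then 0 else η (res c₀ (X k))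
  have hdvd (i : Fin ℓ) : N.det ∣ N.transpose.cramer r i := by
    rw [Matrix.cramer_transpose_apply, hdet, hu.mul_right_dvd]
    refine res_prod_dvd_det A m h₀ (j₀ := j₀) _ fun i' c hc => ?_
    by_cases hi' : i' = i
    · rw [hi', Matrix.updateRow_self]
      have hsum : ∑ k, r k * res c₀ (C (elimCoord c₀ j₀ c k)) = η (res c₀ (linForm c)) := by
        rw [← res_linForm_elimCoord c₀ j₀ c, derivation_res_linForm]
        refine Finset.sum_congr rfl fun k _ => ?_
        by_cases hk : k = j₀
        · simp [hk, elimCoord_self hj₀]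
        · simp only [r, if_neg hk]
      rw [hsum]
      exact hη c hc
    · rw [Matrix.updateRow_ne hi']
      exact dvd_sum_of_isLogDer A m hm hlh hj₀ (hθ.1 i') _ (fun k hk => hrest i' hk) hc
  choose F hF using hdvd
  have hFr : Matrix.vecMul F N = r := by
    have h := Matrix.mulVec_cramer N.transpose r
    have hcr : N.transpose.cramer r = N.det • F := funext hF
    rw [hcr, Matrix.mulVec_smul, Matrix.det_transpose, Matrix.mulVec_transpose] at h
    exact smul_right_injective _ hdet0 h
  have hFj : F j = 0 := by
    have h := congrFun hFr j₀
    simpa [Matrix.vecMul, dotProduct, hself, r] using h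
  refine ⟨fun i => F i, derivation_hypRing_ext hj₀ fun k hk => ?_, fun f hf => ?_⟩
  · rw [← hvecMul F hFj hk, hFr]
    simp only [r, if_neg hk]
  · let G : Fin ℓ → HypRing c₀ := fun i => if hi : i = j then 0 else f ⟨i, hi⟩
    have hGj : G j = 0 := dif_pos rfl
    have hGf (i : {i // i ≠ j}) : G i = f i := dif_neg i.2
    have hGr : Matrix.vecMul G N = r := by
      ext1 k
      by_cases hk : k = j₀
      · simp [Matrix.vecMul, dotProduct, hk, hself, hGj, r]
      · rw [hvecMul G hGj hk]
        simp only [hGf, ← hf, r, if_neg hk]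
    have hGF : G - F = 0 := Matrix.eq_zero_of_vecMul_eq_zero hdet0 (by
      rw [Matrix.sub_vecMul, hGr, hFr, sub_self])
    ext1 i
    rw [← hGf, sub_eq_zero.mp hGF]

end RestrictedBasis

set_option maxHeartbeats 1000000 in
set_option synthInstance.maxHeartbeats 400000 in
theorem stmt19 (A : Arrangement K ℓ) (m : (Fin ℓ → K) → ℕ)
    (hm : ∀ c ∈ A.hyps, 0 < m c) (c₀ : Fin ℓ → K) (hlh : IsLocallyHeavy A m c₀)
    (hfree : IsFree A m) :
    ∃ (θ : Fin ℓ → Der K ℓ) (d : Fin ℓ → ℕ),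
      (∀ i, IsHomogOfDeg (θ i) (d i)) ∧ IsDerBasis A m θ ∧
      ∃ j : Fin ℓ, θ j (linForm c₀) = (linForm c₀) ^ (m c₀) ∧
        (∀ i, i ≠ j → θ i (linForm c₀) = 0) ∧
        ∃ θbar : {i : Fin ℓ // i ≠ j} →
            Derivation K (S K ℓ ⧸ (Ideal.span {linForm c₀}))
              (S K ℓ ⧸ (Ideal.span {linForm c₀})),
          (∀ i (p : S K ℓ),
            θbar i (Ideal.Quotient.mk (Ideal.span {linForm c₀}) p)
              = Ideal.Quotient.mk (Ideal.span {linForm c₀}) (θ i.val p)) ∧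
          (∀ i, ∀ c ∈ A.hyps.erase c₀,
            (Ideal.Quotient.mk (Ideal.span {linForm c₀}) (linForm c)) ^ (EZmult A m c₀ c) ∣
              θbar i (Ideal.Quotient.mk (Ideal.span {linForm c₀}) (linForm c))) ∧
          (∀ η : Derivation K (S K ℓ ⧸ (Ideal.span {linForm c₀}))
              (S K ℓ ⧸ (Ideal.span {linForm c₀})),
            (∀ c ∈ A.hyps.erase c₀,
              (Ideal.Quotient.mk (Ideal.span {linForm c₀}) (linForm c)) ^ (EZmult A m c₀ c) ∣
                η (Ideal.Quotient.mk (Ideal.span {linForm c₀}) (linForm c))) →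
            ∃! f : {i : Fin ℓ // i ≠ j} → (S K ℓ ⧸ (Ideal.span {linForm c₀})),
              η = ∑ i, f i • θbar i) := by
  obtain ⟨d, θ₀, hd, hθ₀⟩ := hfree
  obtain ⟨θ, hθd, hθ, j, hj, hne⟩ := exists_adapted_basis A m hm hlh hd hθ₀
  choose δ hδ using fun i : {i : Fin ℓ // i ≠ j} => exists_derivation_res (hne i.val i.property)
  refine ⟨θ, d, hθd, hθ, j, hj, hne, δ, hδ, fun i c hc => ?_, fun η hη => ?_⟩
  · rw [hδ i]
    exact res_linForm_pow_EZmult_dvd A m hlh (hθ.1 i.val) hc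
  · exact existsUnique_eq_sum_smul_res A m hm hlh hθ hj hne hδ hη

end ArrPaper
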